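/- Let S = ⟨S, δ, L⟩ and S' = ⟨S', δ', L'⟩ be FLTSs witnessed w.r.t. fposΔK and Z a crisp directed simulation between them. Then for every x ∈ S and x' ∈ S', if Z(x,x') holds, then φ^S(x) ≤ φ^S'(x') for all formulas φ of fposΔK. -/

import Mathlib

open unitInterval

noncomputable section
attribute [local instance] Classical.propDecidable

instance : Fact ((0:ℝ) ≤ 1) := ⟨zero_le_one⟩

/-- A left-continuous t-norm on the unit interval `[0,1]`: a commutative, associative
binary operation with neutral element `1`, increasing in both arguments, that
distributes over suprema of nonempty sets (left-continuity). -/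
structure Tnorm where
  mul : I → I → I
  mul_comm : ∀ x y, mul x y = mul y x
  mul_assoc : ∀ x y z, mul (mul x y) z = mul x (mul y z)
  mul_one : ∀ x, mul x 1 = x
  mul_le_mul : ∀ {a b c d : I}, a ≤ b → c ≤ d → mul a c ≤ mul b d
  left_continuous : ∀ (x : I) (s : Set I), s.Nonempty → mul x (sSup s) = sSup (mul x '' s)

/-- The residuum of a t-norm: `(x ⇒ y) = sup {z | z ⊗ x ≤ y}`. -/
def Tnorm.res (T : Tnorm) (x y : I) : I := sSup {z : I | T.mul z x ≤ y}

/-- A fuzzy labeled transition system over actions `A`, propositions `P`, states `St`. -/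
structure FLTS (A P St : Type) where
  delta : St → A → St → I
  label : St → P → I

/-- A crisp directed simulation between two FLTSs. -/
def IsDirSimulation {A P S S' : Type} (M : FLTS A P S) (M' : FLTS A P S')
    (Z : S → S' → Prop) : Prop :=
  (∀ x x', Z x x' → ∀ p, M.label x p ≤ M'.label x' p) ∧
  (∀ x y x' (ρ : A), Z x x' → 0 < M.delta x ρ y →
    ∃ y', M.delta x ρ y ≤ M'.delta x' ρ y' ∧ Z y y') ∧
  (∀ x x' y' (ρ : A), Z x x' → 0 < M'.delta x' ρ y' →
    ∃ y, M'.delta x' ρ y' ≤ M.delta x ρ y ∧ Z y y')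

/-- Formulas of fposΔK. -/
inductive PKForm (A P : Type) : Type
  | const : I → PKForm A P
  | prop : P → PKForm A P
  | baaz : PKForm A P → PKForm A P
  | and : PKForm A P → PKForm A P → PKForm A P
  | or : PKForm A P → PKForm A P → PKForm A P
  | impl : I → PKForm A P → PKForm A P
  | box : A → PKForm A P → PKForm A P
  | dia : A → PKForm A P → PKForm A P

/-- Semantics of fposΔK formulas. -/
def pkSem (T : Tnorm) {A P St : Type} (M : FLTS A P St) : PKForm A P → St → I
  | .const a, _ => a
  | .prop p, x => M.label x p
  | .baaz φ, x => if pkSem T M φ x = 1 then 1 else 0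
  | .and φ ψ, x => min (pkSem T M φ x) (pkSem T M ψ x)
  | .or φ ψ, x => max (pkSem T M φ x) (pkSem T M ψ x)
  | .impl a φ, x => T.res a (pkSem T M φ x)
  | .box ρ φ, x => ⨅ y, T.res (M.delta x ρ y) (pkSem T M φ y)
  | .dia ρ φ, x => ⨆ y, T.mul (M.delta x ρ y) (pkSem T M φ y)

/-- An FLTS is witnessed w.r.t. fposΔK: the supremum in the clause for `⟨ϱ⟩φ`
(resp. the infimum in the clause for `[ϱ]φ`) is attained by a greatest
(resp. least) element. -/
def WitnessedPK (T : Tnorm) {A P St : Type} (M : FLTS A P St) : Prop :=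
  (∀ (φ : PKForm A P) (ρ : A) (x : St), ∃ y : St, ∀ z : St,
    T.mul (M.delta x ρ z) (pkSem T M φ z) ≤ T.mul (M.delta x ρ y) (pkSem T M φ y)) ∧
  (∀ (φ : PKForm A P) (ρ : A) (x : St), ∃ y : St, ∀ z : St,
    T.res (M.delta x ρ y) (pkSem T M φ y) ≤ T.res (M.delta x ρ z) (pkSem T M φ z))

/-!
Induction on the formula. A transition of positive degree is dominated by a matching transition of
the other system, which compares the two sides of a modality term by term. A transition of degree
`0` need not be matched, but it contributes only `0 ⊗ a = 0` to a supremum and `0 ⇒ a = 1` to an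
infimum.
-/

namespace Tnorm

variable (T : Tnorm)

lemma zero_mul (x : I) : T.mul 0 x = 0 :=
  le_antisymm ((T.mul_le_mul le_rfl unitInterval.le_one').trans_eq (T.mul_one 0))
    unitInterval.nonneg'

lemma mul_zero (x : I) : T.mul x 0 = 0 :=
  (T.mul_comm x 0).trans (T.zero_mul x)

lemma res_le_res {a b c d : I} (hba : b ≤ a) (hcd : c ≤ d) : T.res a c ≤ T.res b d :=
  sSup_le_sSup fun _ hz ↦ (T.mul_le_mul le_rfl hba).trans (le_trans hz hcd)

lemma zero_res (y : I) : T.res 0 y = 1 :=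
  le_antisymm unitInterval.le_one'
    (le_sSup ((T.mul_zero 1).trans_le unitInterval.nonneg'))

variable {ι κ : Sort*} {d f : ι → I} {e g : κ → I}

lemma iSup_mul_le_iSup_mul (h : ∀ i, 0 < d i → ∃ j, d i ≤ e j ∧ f i ≤ g j) :
    ⨆ i, T.mul (d i) (f i) ≤ ⨆ j, T.mul (e j) (g j) := by
  refine iSup_le fun i ↦ ?_
  obtain hzero | hpos := (unitInterval.nonneg' : 0 ≤ d i).eq_or_lt
  · rw [← hzero, T.zero_mul]
    exact unitInterval.nonneg'
  · obtain ⟨j, hde, hfg⟩ := h i hpos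
    exact le_iSup_of_le j (T.mul_le_mul hde hfg)

lemma iInf_res_le_iInf_res (h : ∀ j, 0 < e j → ∃ i, e j ≤ d i ∧ f i ≤ g j) :
    ⨅ i, T.res (d i) (f i) ≤ ⨅ j, T.res (e j) (g j) := by
  refine le_iInf fun j ↦ ?_
  obtain hzero | hpos := (unitInterval.nonneg' : 0 ≤ e j).eq_or_lt
  · rw [← hzero, T.zero_res]
    exact unitInterval.le_one'
  · obtain ⟨i, hed, hfg⟩ := h j hpos
    exact iInf_le_of_le i (T.res_le_res hed hfg)

end Tnorm

lemma monotone_ite_eq_one : Monotone fun a : I ↦ if a = 1 then (1 : I) else 0 := by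
  intro a b hab
  dsimp only
  split_ifs with ha hb
  · exact le_rfl
  · exact absurd (le_antisymm unitInterval.le_one' (ha ▸ hab)) hb
  all_goals exact unitInterval.nonneg'

theorem preservation_dirSimulation_fposK_general {A P S S' : Type}
    (T : Tnorm) (M : FLTS A P S) (M' : FLTS A P S')
    (Z : S → S' → Prop) (hZ : IsDirSimulation M M' Z)
    (x : S) (x' : S') (hx : Z x x') (φ : PKForm A P) :
    pkSem T M φ x ≤ pkSem T M' φ x' := by
  obtain ⟨label_le, forth, back⟩ := hZ
  induction φ generalizing x x' with
  | const a => exact le_rfl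
  | prop p => exact label_le x x' hx p
  | baaz φ ih => exact monotone_ite_eq_one (ih x x' hx)
  | and φ ψ ihφ ihψ => exact min_le_min (ihφ x x' hx) (ihψ x x' hx)
  | or φ ψ ihφ ihψ => exact max_le_max (ihφ x x' hx) (ihψ x x' hx)
  | impl a φ ih => exact T.res_le_res le_rfl (ih x x' hx)
  | box ρ φ ih =>
    refine T.iInf_res_le_iInf_res fun y' hpos ↦ ?_
    obtain ⟨y, hle, hy⟩ := back x x' y' ρ hx hpos
    exact ⟨y, hle, ih y y' hy⟩
  | dia ρ φ ih =>
    refine T.iSup_mul_le_iSup_mul fun y hpos ↦ ?_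
    obtain ⟨y', hle, hy⟩ := forth x y x' ρ hx hpos
    exact ⟨y', hle, ih y y' hy⟩

/-- Formulas of fposΔK are preserved under crisp directed simulations between FLTSs
witnessed w.r.t. fposΔK. -/
theorem preservation_dirSimulation_fposK
    {A P S S' : Type} [Nonempty A] [Nonempty P] [Nonempty S] [Nonempty S']
    (T : Tnorm) (M : FLTS A P S) (M' : FLTS A P S')
    (hM : WitnessedPK T M) (hM' : WitnessedPK T M')
    (Z : S → S' → Prop) (hZ : IsDirSimulation M M' Z) :
    ∀ (x : S) (x' : S'), Z x x' →
      ∀ φ : PKForm A P, pkSem T M φ x ≤ pkSem T M' φ x' :=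
  fun x x' hx φ ↦
    preservation_dirSimulation_fposK_general T M M' Z hZ x x' hx φ
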